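/- arXiv:0911.5527 — 10 statements merged into one kernel-verified Lean document; each statement's English description precedes it below -/
import Mathlib

section
/- Let L ≥ 0 be an integer, a_0,…,a_L nonnegative reals with ∑_{l=0}^L a_l = 1 and a_0 > 0, and 0 < σ_0 ≤ σ_1 ≤ … ≤ σ_L positive reals. Let p : ℝ → ℝ be the one-dimensional mixed Gaussian density p(z) = ∑_{l=0}^L (a_l / (√(2π) σ_l)) · exp(−z²/(2σ_l²)). Then the differential entropy of p satisfies −∫_ℝ p(z) log p(z) dz ≤ ((1 − a_0)/2) · log(σ_L²/σ_0²) + log(√(2πe) · σ_0) + H, where H = −∑_{l=0}^L a_l log a_l (with the convention 0·log 0 = 0). -/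
open MeasureTheory Real

open ProbabilityTheory in
/-- The integrand of the second moment of a centered Gaussian is integrable. -/
lemma integrable_sq_mul_gaussianPDFReal {v : NNReal} (hv : v ≠ 0) :
    Integrable fun x ↦ gaussianPDFReal 0 v x * x ^ 2 := by
  have h : Integrable (fun x : ℝ ↦ x ^ 2) (gaussianReal 0 v) :=
    (memLp_id_gaussianReal' (μ := 0) (v := v) 2 (by simp)).integrable_sq
  rw [gaussianReal_of_var_ne_zero 0 hv,
    integrable_withDensity_iff_integrable_smul' (measurable_gaussianPDF 0 v)
      (by filter_upwards with x using gaussianPDF_lt_top)] at h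
  simpa [toReal_gaussianPDF] using h

open ProbabilityTheory in
/-- The second moment of a centered Gaussian is its variance. -/
lemma integral_sq_mul_gaussianPDFReal {v : NNReal} (hv : v ≠ 0) :
    ∫ x, gaussianPDFReal 0 v x * x ^ 2 = v := by
  have h := variance_id_gaussianReal (μ := 0) (v := v)
  rw [variance_of_integral_eq_zero aemeasurable_id (by simp),
    integral_gaussianReal_eq_integral_smul hv] at h
  simpa using h

open ProbabilityTheory in
lemma negMulLog_mul_gaussianPDFReal (c : ℝ) {v : NNReal} (hv : v ≠ 0) (x : ℝ) :
    negMulLog (c * gaussianPDFReal 0 v x) =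
      (negMulLog c + c * (log (2 * π * v) / 2)) * gaussianPDFReal 0 v x
        + c / (2 * v) * (gaussianPDFReal 0 v x * x ^ 2) := by
  have hv' : (0 : ℝ) < v := by positivity
  have hlog : log (gaussianPDFReal 0 v x) = -(log (2 * π * v) / 2) - x ^ 2 / (2 * v) := by
    rw [gaussianPDFReal, log_mul (by positivity) (exp_ne_zero _), log_inv, log_exp,
      log_sqrt (by positivity)]
    ring
  rw [negMulLog_mul]
  simp only [negMulLog, hlog]
  field_simp
  ring

open ProbabilityTheory in
lemma integrable_negMulLog_mul_gaussianPDFReal (c : ℝ) {v : NNReal} (hv : v ≠ 0) :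
    Integrable fun x ↦ negMulLog (c * gaussianPDFReal 0 v x) := by
  simp_rw [negMulLog_mul_gaussianPDFReal c hv]
  exact ((integrable_gaussianPDFReal 0 v).const_mul _).add
    ((integrable_sq_mul_gaussianPDFReal hv).const_mul _)

open ProbabilityTheory in
/-- The differential entropy of a centered Gaussian density scaled by a constant `c`. -/
lemma integral_negMulLog_mul_gaussianPDFReal (c : ℝ) {v : NNReal} (hv : v ≠ 0) :
    ∫ x, negMulLog (c * gaussianPDFReal 0 v x) =
      negMulLog c + c * ((log (2 * π * v) + 1) / 2) := by
  have hv' : (v : ℝ) ≠ 0 := by exact_mod_cast hv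
  simp_rw [negMulLog_mul_gaussianPDFReal c hv]
  rw [integral_add ((integrable_gaussianPDFReal 0 v).const_mul _)
    ((integrable_sq_mul_gaussianPDFReal hv).const_mul _), integral_const_mul, integral_const_mul,
    integral_gaussianPDFReal_eq_one 0 hv, integral_sq_mul_gaussianPDFReal hv]
  field_simp
  ring

/-- `negMulLog` is subadditive on nonnegative reals. -/
lemma negMulLog_sum_le {ι : Type*} (s : Finset ι) (q : ι → ℝ) (hq : ∀ i ∈ s, 0 ≤ q i) :
    negMulLog (∑ i ∈ s, q i) ≤ ∑ i ∈ s, negMulLog (q i) := by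
  rw [negMulLog, ← Finset.sum_neg_distrib, Finset.sum_mul]
  refine Finset.sum_le_sum fun i hi ↦ ?_
  rcases (hq i hi).eq_or_lt with h | h
  · simp [← h]
  · have := mul_le_mul_of_nonneg_left
      (log_le_log h (Finset.single_le_sum hq hi)) h.le
    rw [negMulLog]
    linarith

open ProbabilityTheory in
/-- The entropy of a mixture of centered Gaussians is at most the entropy of the weights plus the
average entropy of the components. -/
lemma integral_negMulLog_gaussianMixture_le {ι : Type*} [Fintype ι] (a : ι → ℝ)
    (ha : ∀ i, 0 ≤ a i) (v : ι → NNReal) (hv : ∀ i, v i ≠ 0) :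
    ∫ x, negMulLog (∑ i, a i * gaussianPDFReal 0 (v i) x) ≤
      ∑ i, (negMulLog (a i) + a i * ((log (2 * π * v i) + 1) / 2)) := by
  have hterm (x : ℝ) (i : ι) : 0 ≤ a i * gaussianPDFReal 0 (v i) x :=
    mul_nonneg (ha i) (gaussianPDFReal_nonneg _ _ _)
  have hint : Integrable fun x ↦ ∑ i, negMulLog (a i * gaussianPDFReal 0 (v i) x) :=
    integrable_finsetSum _ fun i _ ↦ integrable_negMulLog_mul_gaussianPDFReal (a i) (hv i)
  have hle (x : ℝ) : negMulLog (∑ i, a i * gaussianPDFReal 0 (v i) x) ≤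
      ∑ i, negMulLog (a i * gaussianPDFReal 0 (v i) x) :=
    negMulLog_sum_le _ _ fun i _ ↦ hterm x i
  have hmeas : Measurable fun x ↦ ∑ i, a i * gaussianPDFReal 0 (v i) x :=
    Finset.measurable_fun_sum _ fun i _ ↦ (measurable_gaussianPDFReal 0 (v i)).const_mul _
  have hmix : Integrable fun x ↦ ∑ i, a i * gaussianPDFReal 0 (v i) x :=
    integrable_finsetSum _ fun i _ ↦ (integrable_gaussianPDFReal 0 (v i)).const_mul _
  have hge (x : ℝ) :
      -((∑ i, a i * gaussianPDFReal 0 (v i) x) * log (∑ i, a i * (√(2 * π * v i))⁻¹)) ≤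
        negMulLog (∑ i, a i * gaussianPDFReal 0 (v i) x) := by
    have hsum := Finset.sum_nonneg fun i (_ : i ∈ Finset.univ) ↦ hterm x i
    rcases hsum.eq_or_lt with h | h
    · simp [← h]
    · rw [negMulLog, neg_mul, neg_le_neg_iff]
      refine mul_le_mul_of_nonneg_left (log_le_log h ?_) h.le
      refine Finset.sum_le_sum fun i _ ↦ mul_le_mul_of_nonneg_left ?_ (ha i)
      rw [gaussianPDFReal]
      refine mul_le_of_le_one_right (by positivity) (exp_le_one_iff.2 ?_)
      rw [neg_div, neg_nonpos]
      positivity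
  calc ∫ x, negMulLog (∑ i, a i * gaussianPDFReal 0 (v i) x)
      ≤ ∫ x, ∑ i, negMulLog (a i * gaussianPDFReal 0 (v i) x) :=
        integral_mono (integrable_of_le_of_le
          (continuous_negMulLog.measurable.comp hmeas).aestronglyMeasurable
          (.of_forall hge) (.of_forall hle) (hmix.mul_const _).neg hint) hint hle
    _ = _ := by
        rw [integral_finsetSum _ fun i _ ↦ integrable_negMulLog_mul_gaussianPDFReal (a i) (hv i)]
        exact Finset.sum_congr rfl fun i _ ↦ integral_negMulLog_mul_gaussianPDFReal (a i) (hv i)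

/-- **Lemma 2.**  The differential entropy of a one-dimensional mixed Gaussian density
`p z = ∑ l, a l / (√(2π) σ l) * exp (-z²/(2 σ l²))` with weights `a l` (summing to one, with
`a 0 > 0`) and standard deviations `0 < σ 0 ≤ σ 1 ≤ … ≤ σ L` is bounded above by
`(1 - a 0)/2 * log (σ L² / σ 0²) + log (√(2πe) σ 0) + H`, where `H` is the discrete entropy
of the weights. -/
theorem mixedGaussian_entropy_upper_bound
    (L : ℕ) (a : Fin (L + 1) → ℝ) (ha : ∀ l, 0 ≤ a l) (hasum : ∑ l, a l = 1)
    (ha0 : 0 < a 0)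
    (σ : Fin (L + 1) → ℝ) (hσ0 : 0 < σ 0) (hσmono : Monotone σ) :
    -∫ z : ℝ, (∑ l, a l / (Real.sqrt (2 * π) * σ l) * Real.exp (-z ^ 2 / (2 * σ l ^ 2))) *
        Real.log (∑ l, a l / (Real.sqrt (2 * π) * σ l) * Real.exp (-z ^ 2 / (2 * σ l ^ 2)))
      ≤ (1 - a 0) / 2 * Real.log (σ (Fin.last L) ^ 2 / σ 0 ^ 2)
        + Real.log (Real.sqrt (2 * π * Real.exp 1) * σ 0)
        + (-∑ l, a l * Real.log (a l)) := by
  have hσ (l) : 0 < σ l := hσ0.trans_le (hσmono (Fin.zero_le l))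
  have hv (l) : (σ l ^ 2).toNNReal ≠ 0 := (toNNReal_pos.2 (pow_pos (hσ l) 2)).ne'
  have hcoe (l) : ((σ l ^ 2).toNNReal : ℝ) = σ l ^ 2 := coe_toNNReal _ (sq_nonneg _)
  have key := integral_negMulLog_gaussianMixture_le a ha (fun l ↦ (σ l ^ 2).toNNReal) hv
  have hpdf (l) (z : ℝ) : a l * ProbabilityTheory.gaussianPDFReal 0 (σ l ^ 2).toNNReal z =
      a l / (√(2 * π) * σ l) * exp (-z ^ 2 / (2 * σ l ^ 2)) := by
    rw [ProbabilityTheory.gaussianPDFReal, hcoe, sqrt_mul (by positivity), sqrt_sq (hσ l).le,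
      sub_zero, div_eq_mul_inv (a l), mul_assoc]
  simp_rw [hpdf, hcoe, negMulLog, neg_mul, integral_neg] at key
  refine key.trans ?_
  have hlog (l) : log (2 * π * σ l ^ 2) = log (2 * π) + 2 * log (σ l) := by
    rw [log_mul (by positivity) (pow_pos (hσ l) 2).ne', log_pow, Nat.cast_ofNat]
  have hlog_e : log (√(2 * π * exp 1) * σ 0) = (log (2 * π) + 1) / 2 + log (σ 0) := by
    rw [log_mul (by positivity) hσ0.ne', log_sqrt (by positivity),
      log_mul (by positivity) (exp_ne_zero 1), log_exp]
  have hlog_ratio : log (σ (Fin.last L) ^ 2 / σ 0 ^ 2) =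
      2 * log (σ (Fin.last L)) - 2 * log (σ 0) := by
    rw [log_div (pow_pos (hσ _) 2).ne' (pow_pos hσ0 2).ne', log_pow, log_pow, Nat.cast_ofNat]
  have hmean : ∑ l, a l * log (σ l) ≤ a 0 * log (σ 0) + (1 - a 0) * log (σ (Fin.last L)) := by
    rw [Fin.sum_univ_succ] at hasum ⊢
    rw [← hasum, add_sub_cancel_left, Finset.sum_mul]
    gcongr with i
    · exact ha _
    · exact hσ _
    · exact hσmono (Fin.le_last _)
  have hsplit : ∑ l, (-(a l * log (a l)) + a l * ((log (2 * π * σ l ^ 2) + 1) / 2)) =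
      -∑ l, a l * log (a l) + (log (2 * π) + 1) / 2 + ∑ l, a l * log (σ l) := by
    rw [← one_mul ((log (2 * π) + 1) / 2), ← hasum, Finset.sum_mul, ← Finset.sum_neg_distrib,
      ← Finset.sum_add_distrib, ← Finset.sum_add_distrib]
    refine Finset.sum_congr rfl fun l _ ↦ ?_
    rw [hlog]
    ring
  rw [hsplit, hlog_e, hlog_ratio]
  linarith
end

section
/- Let u > 0 be a real number and N ≥ 1 an integer. Define SMG(v, N) = (N/2) · v · (1 − v/u)^{N−1} for v ∈ [0, u]. Then sup_{v ∈ [0,u]} SMG(v, N) = (u/2) · (1 − 1/N)^{N−1}, and the supremum is attained at v = u/N. -/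
/-- On `(-∞, 1]`, the function `x ↦ (n + 1) x (1 - x) ^ n` is bounded by its value at
`x = 1 / (n + 1)`. -/
theorem succ_mul_mul_one_sub_pow_le {x : ℝ} (hx : x ≤ 1) (n : ℕ) :
    (n + 1) * x * (1 - x) ^ n ≤ (1 - 1 / ((n : ℝ) + 1)) ^ n := by
  rcases n.eq_zero_or_pos with rfl | hn
  · simpa using hx
  have hn' : (0 : ℝ) < n := by exact_mod_cast hn
  have hc : 1 - 1 / ((n : ℝ) + 1) = n / (n + 1) := by field_simp; ring
  have hx' : 0 ≤ 1 - x := sub_nonneg.2 hx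
  have hc₀ : 0 ≤ (n : ℝ) / (n + 1) := by positivity
  have h := pow_add_mul_le_add_pow (b := (n : ℝ) / (n + 1) - (1 - x)) hx' (by linarith) (n + 1)
  rw [add_sub_cancel, Nat.add_sub_cancel, Nat.cast_add_one] at h
  have hlhs : (1 - x) ^ (n + 1) + (n + 1) * (1 - x) ^ n * ((n : ℝ) / (n + 1) - (1 - x))
      = n / (n + 1) * ((n + 1) * x * (1 - x) ^ n) := by
    field_simp
    ring
  rw [hlhs, pow_succ'] at h
  rw [hc]
  exact le_of_mul_le_mul_left h (by positivity)


/-- **Optimal fair hopping parameter (eqs. (37)–(39)).**  For `SMG(v,N) = (N/2) v (1 - v/u)^(N-1)`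
on `v ∈ [0,u]`, the supremum equals `(u/2) (1 - 1/N)^(N-1)` and is attained at `v = u/N`. -/
theorem smg_sup (u : ℝ) (hu : 0 < u) (N : ℕ) (hN : 1 ≤ N) :
    IsGreatest ((fun v : ℝ => ((N : ℝ) / 2) * v * (1 - v / u) ^ (N - 1)) '' Set.Icc 0 u)
      ((u / 2) * (1 - 1 / (N : ℝ)) ^ (N - 1)) ∧
    ((N : ℝ) / 2) * (u / N) * (1 - (u / N) / u) ^ (N - 1)
      = (u / 2) * (1 - 1 / (N : ℝ)) ^ (N - 1) ∧ u / (N : ℝ) ∈ Set.Icc 0 u := by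
  have hN' : (1 : ℝ) ≤ N := by exact_mod_cast hN
  have hN₀ : (N : ℝ) ≠ 0 := by positivity
  have hval : ((N : ℝ) / 2) * (u / N) * (1 - (u / N) / u) ^ (N - 1)
      = (u / 2) * (1 - 1 / (N : ℝ)) ^ (N - 1) := by
    have h₁ : (u / N) / u = 1 / (N : ℝ) := by field_simp
    have h₂ : ((N : ℝ) / 2) * (u / N) = u / 2 := by field_simp
    rw [h₁, h₂]
  have hmem : u / (N : ℝ) ∈ Set.Icc 0 u := ⟨by positivity, div_le_self hu.le hN'⟩
  refine ⟨⟨⟨u / N, hmem, hval⟩, ?_⟩, hval, hmem⟩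
  rintro _ ⟨v, hv, rfl⟩
  obtain ⟨n, rfl⟩ : ∃ n, N = n + 1 := ⟨N - 1, by omega⟩
  have h := mul_le_mul_of_nonneg_left
    (succ_mul_mul_one_sub_pow_le ((div_le_one hu).2 hv.2) n) (half_pos hu).le
  simp only [Nat.add_sub_cancel, Nat.cast_add, Nat.cast_one]
  refine le_of_eq_of_le ?_ h
  have hv' : u * (v / u) = v := by field_simp
  linear_combination (-((n : ℝ) + 1) / 2 * (1 - v / u) ^ n) * hv'
end

section
/- Let u > 0 be a real number and N ≥ 2 an integer. For all (v_1,…,v_N) ∈ (0,u)^N, the function Φ(v_1,…,v_N) = ∑_{i=1}^N log( v_i · ∏_{k≠i} (1 − v_k/u) ) satisfies Φ(v_1,…,v_N) ≤ Φ(u/N,…,u/N) = N · log( (u/N) · (1 − 1/N)^{N−1} ); i.e., Φ has an absolute maximum at v_i = u/N for all i. -/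
/-- A sum of logarithms of leave-one-out products is separable: each factor `b k` appears in all
terms but the `k`-th. -/
lemma sum_log_mul_prod_erase {N : ℕ} {a b : Fin N → ℝ}
    (ha : ∀ i, a i ≠ 0) (hb : ∀ i, b i ≠ 0) :
    ∑ i, Real.log (a i * ∏ k ∈ Finset.univ.erase i, b k) =
      ∑ i, (Real.log (a i) + ((N : ℝ) - 1) * Real.log (b i)) := by
  have hlog (i : Fin N) : Real.log (a i * ∏ k ∈ Finset.univ.erase i, b k) =
      Real.log (a i) + (∑ k, Real.log (b k) - Real.log (b i)) := by
    rw [Real.log_mul (ha i) (Finset.prod_ne_zero_iff.2 fun k _ => hb k),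
      Real.log_prod fun k _ => hb k, Finset.sum_erase_eq_sub (Finset.mem_univ i)]
  simp only [hlog, Finset.sum_add_distrib, Finset.sum_sub_distrib, Finset.sum_const,
    Finset.card_univ, Fintype.card_fin, nsmul_eq_mul, ← Finset.mul_sum]
  ring

/-- The tangent-line bound for the logarithm at `b`. -/
lemma Real.log_le_log_add_div_sub_one {a b : ℝ} (ha : 0 < a) (hb : 0 < b) :
    Real.log a ≤ Real.log b + (a / b - 1) := by
  have h := Real.log_le_sub_one_of_pos (div_pos ha hb)
  rw [Real.log_div ha.ne' hb.ne'] at h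
  linarith

/-- For `n > 1`, the function `x ↦ log x + (n - 1) log (1 - x / u)` on `(0, u)` is maximal
at `u / n`. -/
lemma log_add_mul_log_one_sub_div_le {u n x : ℝ} (hu : 0 < u) (hn : 1 < n)
    (hx : x ∈ Set.Ioo 0 u) :
    Real.log x + (n - 1) * Real.log (1 - x / u) ≤
      Real.log (u / n) + (n - 1) * Real.log (1 - (u / n) / u) := by
  have hn0 : 0 < n := by linarith
  have hn1 : 0 < n - 1 := by linarith
  have hcomp : 1 - (u / n) / u = (n - 1) / n := by field_simp
  have hxu : 0 < 1 - x / u := sub_pos.2 ((div_lt_one hu).2 hx.2)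
  have h₁ := Real.log_le_log_add_div_sub_one hx.1 (div_pos hu hn0)
  have h₂ := mul_le_mul_of_nonneg_left
    (Real.log_le_log_add_div_sub_one hxu (div_pos hn1 hn0)) hn1.le
  have hcancel : (x / (u / n) - 1) + (n - 1) * ((1 - x / u) / ((n - 1) / n) - 1) = 0 := by
    field_simp
    ring
  rw [hcomp]
  linarith

/-- **Observation 1.**  The proportional-fair utility
`Φ(v) = ∑ i, log (v i * ∏_{k ≠ i} (1 - v k / u))` on `(0,u)^N` has an absolute maximum at
`v i = u / N` for all `i`, where it takes the value `N * log ((u/N) * (1 - 1/N)^(N-1))`. -/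
theorem proportional_fair_max (u : ℝ) (hu : 0 < u) (N : ℕ) (hN : 2 ≤ N) :
    (∀ v : Fin N → ℝ, (∀ i, v i ∈ Set.Ioo 0 u) →
      ∑ i, Real.log (v i * ∏ k ∈ Finset.univ.erase i, (1 - v k / u)) ≤
        ∑ i : Fin N, Real.log ((u / N) * ∏ k ∈ Finset.univ.erase i, (1 - (u / N) / u))) ∧
    ∑ i : Fin N, Real.log ((u / N) * ∏ k ∈ Finset.univ.erase i, (1 - (u / N) / u))
      = N * Real.log ((u / N) * (1 - 1 / (N : ℝ)) ^ (N - 1)) := by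
  have hN1 : (1 : ℝ) < N := by exact_mod_cast hN
  have hN0 : (0 : ℝ) < N := by linarith
  have hcomp : 1 - (u / N) / u = 1 - 1 / (N : ℝ) := by field_simp
  have hpos : 0 < 1 - 1 / (N : ℝ) := sub_pos.2 ((div_lt_one hN0).2 hN1)
  refine ⟨fun v hv => ?_, ?_⟩
  · rw [sum_log_mul_prod_erase (fun i => (hv i).1.ne')
        (fun i => (sub_pos.2 ((div_lt_one hu).2 (hv i).2)).ne'),
      sum_log_mul_prod_erase (fun _ => (div_pos hu hN0).ne')
        (fun _ => hcomp ▸ hpos.ne')]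
    exact Finset.sum_le_sum fun i _ => log_add_mul_log_one_sub_div_le hu hN1 (hv i)
  · simp [hcomp]
end

section
/- Let (Ω, F, P) be a probability space, n_max ≥ 2 an integer, u > 0 a real, and N : Ω → ℕ a random variable with P(1 ≤ N ≤ n_max) = 1. Define η_FD = E[N] · u / (2 n_max) and η_FH = (1/2) · sup_{v ∈ [0,u]} ( v · E[ N · (1 − v/u)^{N−1} ] ). If E[N] < (1/2) · ln( (e² − 1) · n_max ), then η_FD < η_FH. -/
open MeasureTheory

theorem convexOn_mul_exp_neg_two_mul :
    ConvexOn ℝ (Set.Ici 1) fun t : ℝ => t * Real.exp (-2 * t) := by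
  have hexp (t : ℝ) : HasDerivAt (fun t : ℝ => Real.exp (-2 * t)) (Real.exp (-2 * t) * -2) t := by
    simpa using ((hasDerivAt_id t).const_mul (-2)).exp
  refine convexOn_of_hasDerivWithinAt2_nonneg (convex_Ici 1) (by fun_prop)
    (f' := fun t => (1 - 2 * t) * Real.exp (-2 * t))
    (f'' := fun t => 4 * (t - 1) * Real.exp (-2 * t)) ?_ ?_ ?_
  · intro t _
    refine (((hasDerivAt_id t).mul (hexp t)).congr_deriv ?_).hasDerivWithinAt
    simp only [id]
    ring
  · intro t _
    have hlin : HasDerivAt (fun t : ℝ => 1 - 2 * t) (-2) t := by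
      simpa using ((hasDerivAt_id t).const_mul 2).const_sub 1
    refine ((hlin.mul (hexp t)).congr_deriv ?_).hasDerivWithinAt
    ring
  · intro t ht
    rw [interior_Ici] at ht
    have : 0 ≤ t - 1 := sub_nonneg.2 (le_of_lt ht)
    positivity

/-- The gain of frequency hopping is bounded over all hopping parameters. -/
theorem bddAbove_image_mul_integral_hopping {Ω : Type*} [MeasurableSpace Ω] (P : Measure Ω)
    [IsProbabilityMeasure P] {n : ℕ} {u : ℝ} (hu : 0 < u) {N : Ω → ℕ}
    (hN : ∀ᵐ ω ∂P, N ω ≤ n) :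
    BddAbove ((fun v : ℝ =>
      v * ∫ ω, (N ω : ℝ) * (1 - v / u) ^ (N ω - 1) ∂P) '' Set.Icc 0 u) := by
  refine ⟨u * n, ?_⟩
  rintro _ ⟨v, ⟨hv0, hvu⟩, rfl⟩
  have h0 : 0 ≤ 1 - v / u := sub_nonneg.2 ((div_le_one hu).2 hvu)
  have h1 : 1 - v / u ≤ 1 := sub_le_self _ (by positivity)
  have hint : ∫ ω, (N ω : ℝ) * (1 - v / u) ^ (N ω - 1) ∂P ≤ n := by
    refine (le_abs_self _).trans ?_
    have := norm_integral_le_of_norm_le_const (μ := P) (C := n)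
      (f := fun ω => (N ω : ℝ) * (1 - v / u) ^ (N ω - 1)) ?_
    · simpa using this
    · filter_upwards [hN] with ω hω
      rw [Real.norm_of_nonneg (by positivity)]
      exact (mul_le_of_le_one_right (by positivity) (pow_le_one₀ h0 h1)).trans (by exact_mod_cast hω)
  calc v * ∫ ω, (N ω : ℝ) * (1 - v / u) ^ (N ω - 1) ∂P ≤ v * n := by gcongr
    _ ≤ u * n := by gcongr

/-- **Proposition 1.**  Let `N` be the random number of active users, with `1 ≤ N ≤ n_max`
almost surely.  If `E[N] < (1/2) ln((e² - 1) n_max)`, then the average sum multiplexing gain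
`E[N]·u/(2 n_max)` of frequency division is strictly smaller than that of robust frequency
hopping, `(1/2) sup_{v ∈ [0,u]} v · E[N (1 - v/u)^(N-1)]`. -/
theorem prop1_FD_lt_FH
    {Ω : Type*} [MeasurableSpace Ω] (P : Measure Ω) [IsProbabilityMeasure P]
    (nmax : ℕ) (hnmax : 2 ≤ nmax) (u : ℝ) (hu : 0 < u)
    (N : Ω → ℕ) (hNmeas : Measurable N)
    (hNbound : ∀ᵐ ω ∂P, 1 ≤ N ω ∧ N ω ≤ nmax)
    (hE : ∫ ω, (N ω : ℝ) ∂P < (1 / 2) * Real.log ((Real.exp 2 - 1) * nmax)) :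
    (∫ ω, (N ω : ℝ) ∂P) * u / (2 * nmax) <
      (1 / 2) * sSup ((fun v : ℝ =>
        v * ∫ ω, (N ω : ℝ) * (1 - v / u) ^ (N ω - 1) ∂P) '' Set.Icc 0 u) := by
  have hbdd := bddAbove_image_mul_integral_hopping P hu (hNbound.mono fun _ h => h.2)
  have hmeas : Measurable fun ω => (N ω : ℝ) := measurable_from_top.comp hNmeas
  have hint : Integrable (fun ω => (N ω : ℝ)) P := by
    refine Integrable.of_bound hmeas.aestronglyMeasurable nmax ?_
    filter_upwards [hNbound] with ω hω
    simpa using hω.2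
  have hint_exp : Integrable (fun ω => (N ω : ℝ) * Real.exp (-2 * N ω)) P := by
    refine hint.mono (by fun_prop) (ae_of_all _ fun ω => ?_)
    rw [norm_mul, Real.norm_of_nonneg (Real.exp_pos _).le]
    exact mul_le_of_le_one_right (norm_nonneg _) (Real.exp_le_one_iff.2 (by simp))
  have hjensen := convexOn_mul_exp_neg_two_mul.map_integral_le (μ := P)
    (f := fun ω => (N ω : ℝ)) (by fun_prop) isClosed_Ici
    (hNbound.mono fun ω h => by simpa using h.1) hint hint_exp
  have hmean : 1 ≤ ∫ ω, (N ω : ℝ) ∂P := by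
    have := integral_mono_ae (μ := P) (integrable_const (1 : ℝ)) hint
      (hNbound.mono fun ω h => by simpa using h.1)
    simpa using this
  -- The hopping parameter `v = (1 - e⁻²) u` already beats frequency division.
  have hmem : (1 - Real.exp (-2)) * u ∈ Set.Icc 0 u := by
    have h1 : Real.exp (-2) ≤ 1 := Real.exp_le_one_iff.2 (by norm_num)
    exact ⟨mul_nonneg (sub_nonneg.2 h1) hu.le,
      mul_le_of_le_one_left hu.le (sub_le_self _ (Real.exp_pos _).le)⟩
  have hsup := le_csSup hbdd (Set.mem_image_of_mem _ hmem)
  have hgain : ∫ ω, (N ω : ℝ) * (1 - (1 - Real.exp (-2)) * u / u) ^ (N ω - 1) ∂P =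
      Real.exp 2 * ∫ ω, (N ω : ℝ) * Real.exp (-2 * N ω) ∂P := by
    rw [← integral_const_mul]
    refine integral_congr_ae (hNbound.mono fun ω h => ?_)
    dsimp only
    rw [mul_div_cancel_right₀ _ hu.ne', sub_sub_cancel, ← Real.exp_nat_mul, Nat.cast_sub h.1,
      mul_left_comm, ← Real.exp_add]
    congr 2
    push_cast
    ring
  rw [hgain] at hsup
  set m := ∫ ω, (N ω : ℝ) ∂P
  have hn : (0 : ℝ) < nmax := by exact_mod_cast (by omega : 0 < nmax)
  have he : 0 < Real.exp 2 - 1 := sub_pos.2 (Real.one_lt_exp_iff.2 (by norm_num))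
  have hexp : Real.exp (2 * m) < (Real.exp 2 - 1) * nmax :=
    (Real.lt_log_iff_exp_lt (by positivity)).1 (by linarith)
  have hinv : 1 / nmax < (Real.exp 2 - 1) * Real.exp (-2 * m) := by
    rw [neg_mul, Real.exp_neg, ← div_eq_mul_inv, div_lt_div_iff₀ hn (Real.exp_pos _), one_mul]
    exact hexp
  have hcoef : (1 - Real.exp (-2)) * Real.exp 2 = Real.exp 2 - 1 := by
    rw [sub_mul, ← Real.exp_add]
    simp
  calc m * u / (2 * nmax) = 1 / 2 * (u * m * (1 / nmax)) := by field_simp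
    _ < 1 / 2 * (u * m * ((Real.exp 2 - 1) * Real.exp (-2 * m))) := by gcongr
    _ = 1 / 2 * (u * (Real.exp 2 - 1) * (m * Real.exp (-2 * m))) := by ring
    _ ≤ 1 / 2 * (u * (Real.exp 2 - 1) * ∫ ω, (N ω : ℝ) * Real.exp (-2 * N ω) ∂P) := by gcongr
    _ = 1 / 2 * ((1 - Real.exp (-2)) * u *
        (Real.exp 2 * ∫ ω, (N ω : ℝ) * Real.exp (-2 * N ω) ∂P)) := by
      rw [← hcoef]
      ring
    _ ≤ _ := by gcongr
end

section
/- Let ω be a real number with 0 < ω ≤ e^{−2}. Then the function x ↦ x · ω^{x−1} is convex on the interval [1, ∞). -/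
theorem hasDerivAt_rpow_sub_one {w : ℝ} (hw : 0 < w) (x : ℝ) :
    HasDerivAt (fun y : ℝ => w ^ (y - 1)) (w ^ (x - 1) * Real.log w) x := by
  simpa [mul_comm] using ((hasDerivAt_id' x).sub_const 1).const_rpow hw

theorem hasDerivAt_mul_rpow_sub_one {w : ℝ} (hw : 0 < w) (x : ℝ) :
    HasDerivAt (fun y : ℝ => y * w ^ (y - 1)) (w ^ (x - 1) * (1 + x * Real.log w)) x := by
  refine ((hasDerivAt_id' x).mul (hasDerivAt_rpow_sub_one hw x)).congr_deriv ?_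
  ring

theorem hasDerivAt_deriv_mul_rpow_sub_one {w : ℝ} (hw : 0 < w) (x : ℝ) :
    HasDerivAt (fun y : ℝ => w ^ (y - 1) * (1 + y * Real.log w))
      (w ^ (x - 1) * (x * Real.log w ^ 2 + 2 * Real.log w)) x := by
  refine ((hasDerivAt_rpow_sub_one hw x).mul
    (((hasDerivAt_id' x).mul_const (Real.log w)).const_add 1)).congr_deriv ?_
  ring

/-- **Appendix B convexity fact.**  For `0 < ω ≤ e⁻²`, the function `x ↦ x * ω^(x-1)`
(real exponent) is convex on `[1, ∞)`. -/
theorem convexOn_mul_rpow_of_le_exp_neg_two (w : ℝ) (hw0 : 0 < w)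
    (hw : w ≤ Real.exp (-2)) :
    ConvexOn ℝ (Set.Ici (1 : ℝ)) (fun x : ℝ => x * w ^ (x - 1)) := by
  have hlog : Real.log w ≤ -2 := (Real.log_le_iff_le_exp hw0).2 hw
  refine convexOn_of_hasDerivWithinAt2_nonneg (convex_Ici 1)
    (fun x _ => (hasDerivAt_mul_rpow_sub_one hw0 x).continuousAt.continuousWithinAt)
    (fun x _ => (hasDerivAt_mul_rpow_sub_one hw0 x).hasDerivWithinAt)
    (fun x _ => (hasDerivAt_deriv_mul_rpow_sub_one hw0 x).hasDerivWithinAt)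
    fun x hx => mul_nonneg (Real.rpow_nonneg hw0.le _) ?_
  have hx1 : 1 ≤ x := interior_subset hx
  nlinarith [mul_nonneg (sub_nonneg.2 hx1) (sq_nonneg (Real.log w))]
end

section
/- Let (Ω, F, P) be a probability space and N : Ω → ℕ a random variable with P(N ≥ 1) = 1 and E[N] < ∞, and let ω be a real number with 0 < ω ≤ e^{−2}. Then E[ N · ω^{N−1} ] ≥ E[N] · ω^{E[N]−1}. -/
open MeasureTheory

/-- For `0 < w ≤ e⁻²`, the function `x ↦ x w^(x-1)` is convex on `[1, ∞)`. -/
lemma convexOn_mul_rpow_sub_one {w : ℝ} (hw0 : 0 < w) (hw : w ≤ Real.exp (-2)) :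
    ConvexOn ℝ (Set.Ici 1) (fun x : ℝ => x * w ^ (x - 1)) := by
  have hlog : Real.log w ≤ -2 := (Real.log_le_iff_le_exp hw0).2 hw
  have hpow (x : ℝ) : HasDerivAt (fun x : ℝ => w ^ (x - 1)) (Real.log w * w ^ (x - 1)) x := by
    simpa using ((hasDerivAt_id x).sub_const 1).const_rpow hw0
  have hderiv (x : ℝ) : HasDerivAt (fun x : ℝ => x * w ^ (x - 1))
      ((1 + x * Real.log w) * w ^ (x - 1)) x := by
    refine ((hasDerivAt_id' x).mul (hpow x)).congr_deriv ?_
    ring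
  have hderiv2 (x : ℝ) : HasDerivAt (fun x : ℝ => (1 + x * Real.log w) * w ^ (x - 1))
      (Real.log w * (2 + x * Real.log w) * w ^ (x - 1)) x := by
    refine ((((hasDerivAt_id' x).mul_const (Real.log w)).const_add 1).mul (hpow x)).congr_deriv ?_
    ring
  refine convexOn_of_hasDerivWithinAt2_nonneg (convex_Ici 1)
    (fun x _ => (hderiv x).continuousAt.continuousWithinAt)
    (fun x _ => (hderiv x).hasDerivWithinAt) (fun x _ => (hderiv2 x).hasDerivWithinAt) ?_
  intro x hx
  have hx1 : 1 ≤ x := interior_subset hx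
  refine mul_nonneg (mul_nonneg_of_nonpos_of_nonpos ?_ ?_) (Real.rpow_nonneg hw0.le _)
  · linarith
  · nlinarith

/-- **Jensen step (eq. (60)) of Appendix B.**  For a random number of users `N ≥ 1` a.s. with
finite mean, and `0 < ω ≤ e⁻²`, one has `E[N ω^(N-1)] ≥ E[N] ω^(E[N]-1)`. -/
theorem jensen_mul_rpow
    {Ω : Type*} [MeasurableSpace Ω] (P : Measure Ω) [IsProbabilityMeasure P]
    (N : Ω → ℕ) (hNmeas : Measurable N) (hN1 : ∀ᵐ ω ∂P, 1 ≤ N ω)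
    (hNint : Integrable (fun ω => (N ω : ℝ)) P)
    (w : ℝ) (hw0 : 0 < w) (hw : w ≤ Real.exp (-2)) :
    ∫ ω, (N ω : ℝ) * w ^ ((N ω : ℝ) - 1) ∂P ≥
      (∫ ω, (N ω : ℝ) ∂P) * w ^ ((∫ ω, (N ω : ℝ) ∂P) - 1) := by
  have hw1 : w ≤ 1 := hw.trans (Real.exp_le_one_iff.2 (by norm_num))
  have hcont : Continuous (fun x : ℝ => x * w ^ (x - 1)) :=
    continuous_id.mul (Real.continuous_const_rpow hw0.ne' |>.comp (continuous_sub_right 1))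
  refine (convexOn_mul_rpow_sub_one hw0 hw).map_integral_le hcont.continuousOn isClosed_Ici
    (hN1.mono fun _ h => by simpa using h) hNint ?_
  refine hNint.mono (hcont.comp_aestronglyMeasurable hNint.aestronglyMeasurable) ?_
  filter_upwards [hN1] with a ha
  have hle : w ^ ((N a : ℝ) - 1) ≤ 1 :=
    Real.rpow_le_one hw0.le hw1 (sub_nonneg.2 (by exact_mod_cast ha))
  rw [Function.comp_apply, norm_mul, Real.norm_of_nonneg (Real.rpow_nonneg hw0.le _)]
  exact mul_le_of_le_one_right (norm_nonneg _) hle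
end

section
/- The function g(x) = (1/x) · (1 − 1/x)^{x−1} is strictly decreasing on the interval (1, ∞). -/
theorem strictAntiOn_sub_one_mul_log_sub_mul_log :
    StrictAntiOn (fun x : ℝ => (x - 1) * Real.log (x - 1) - x * Real.log x)
      (Set.Ioi (1 : ℝ)) := by
  have hderiv : ∀ x ∈ Set.Ioi (1 : ℝ),
      HasDerivAt (fun x : ℝ => (x - 1) * Real.log (x - 1) - x * Real.log x)
        (Real.log (x - 1) + 1 - (Real.log x + 1)) x := by
    intro x hx
    have hx : 1 < x := hx
    exact ((Real.hasDerivAt_mul_log (sub_pos.2 hx).ne').comp_sub_const x 1).sub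
      (Real.hasDerivAt_mul_log (by positivity))
  refine strictAntiOn_of_deriv_neg (convex_Ioi 1)
    (fun x hx => (hderiv x hx).continuousAt.continuousWithinAt) fun x hx => ?_
  rw [interior_Ioi] at hx
  rw [(hderiv x hx).deriv]
  have hx : 1 < x := hx
  linarith [Real.log_lt_log (sub_pos.2 hx) (sub_one_lt x)]

theorem inv_mul_one_sub_inv_rpow_eq_exp {x : ℝ} (hx : 1 < x) :
    (1 / x) * (1 - 1 / x) ^ (x - 1) =
      Real.exp ((x - 1) * Real.log (x - 1) - x * Real.log x) := by
  have hx0 : 0 < x := by linarith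
  have hx1 : 0 < x - 1 := sub_pos.2 hx
  have hdiv : 1 - 1 / x = (x - 1) / x := by field_simp
  rw [hdiv, Real.rpow_def_of_pos (div_pos hx1 hx0), Real.log_div hx1.ne' hx0.ne', one_div]
  nth_rewrite 1 [← Real.exp_log hx0]
  rw [← Real.exp_neg, ← Real.exp_add]
  ring_nf

/-- The function `g(x) = (1/x) (1 - 1/x)^(x-1)` (real exponent) is strictly decreasing
on `(1, ∞)`. -/
theorem strictAntiOn_inv_mul_one_sub_inv_rpow :
    StrictAntiOn (fun x : ℝ => (1 / x) * (1 - 1 / x) ^ (x - 1)) (Set.Ioi (1 : ℝ)) := by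
  intro x hx y hy hxy
  simp only [inv_mul_one_sub_inv_rpow_eq_exp hx, inv_mul_one_sub_inv_rpow_eq_exp hy]
  exact Real.exp_lt_exp.2 (strictAntiOn_sub_one_mul_log_sub_mul_log hx hy hxy)
end

section
/- Let (Ω, F, P) be a probability space, u > 0 a real, and N : Ω → ℕ a random variable with P(N ≥ 1) = 1 and m = E[N] < ∞ (so m ≥ 1). Then sup_{v ∈ [0,u]} ( v · E[ (1 − v/u)^{N−1} ] ) ≥ (u/m) · (1 − 1/m)^{m−1} (with the convention 0⁰ = 1 when m = 1 or v = u). -/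
open MeasureTheory

section GeometricMoment

variable {Ω : Type*} [MeasurableSpace Ω] {P : Measure Ω} [IsProbabilityMeasure P]
  {N : Ω → ℕ} {q : ℝ}

lemma integrable_pow_natSub_one (hN : Measurable N) (hq0 : 0 ≤ q) (hq1 : q ≤ 1) :
    Integrable (fun ω => q ^ (N ω - 1)) P := by
  refine Integrable.of_bound
    ((Measurable.of_discrete (f := fun n : ℕ => q ^ (n - 1))).comp hN).aestronglyMeasurable 1
    (Filter.Eventually.of_forall fun ω => ?_)
  rw [Real.norm_of_nonneg (by positivity)]
  exact pow_le_one₀ hq0 hq1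

lemma integral_pow_natSub_one_le_one (hN : Measurable N) (hq0 : 0 ≤ q) (hq1 : q ≤ 1) :
    ∫ ω, q ^ (N ω - 1) ∂P ≤ 1 := by
  simpa using integral_mono (integrable_pow_natSub_one (P := P) hN hq0 hq1)
    (integrable_const (1 : ℝ)) fun ω => pow_le_one₀ hq0 hq1

/-- Jensen's inequality for `x ↦ q ^ (x - 1)`. -/
lemma rpow_integral_sub_one_le_integral_pow (hN : Measurable N) (hN1 : ∀ᵐ ω ∂P, 1 ≤ N ω)
    (hNint : Integrable (fun ω => (N ω : ℝ)) P) (hq0 : 0 < q) (hq1 : q ≤ 1) :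
    q ^ ((∫ ω, (N ω : ℝ) ∂P) - 1) ≤ ∫ ω, q ^ (N ω - 1) ∂P := by
  have hpow : (fun ω => q ^ (N ω - 1)) =ᵐ[P] fun ω => q ^ ((N ω : ℝ) - 1) := by
    filter_upwards [hN1] with ω hω
    rw [← Real.rpow_natCast, Nat.cast_sub hω, Nat.cast_one]
  have hjensen := (convexOn_rpow_left hq0).map_integral_le (μ := P)
    (f := fun ω => (N ω : ℝ) - 1)
    (Real.continuous_const_rpow hq0.ne').continuousOn isClosed_univ (by simp)
    (hNint.sub (integrable_const 1))
    ((integrable_pow_natSub_one hN hq0.le hq1).congr hpow)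
  rw [integral_congr_ae hpow]
  simpa [integral_sub hNint (integrable_const 1)] using hjensen

lemma ae_eq_one_of_integral_eq_one (hN1 : ∀ᵐ ω ∂P, 1 ≤ N ω)
    (hNint : Integrable (fun ω => (N ω : ℝ)) P) (h : ∫ ω, (N ω : ℝ) ∂P = 1) :
    ∀ᵐ ω ∂P, N ω = 1 := by
  have hnonneg : 0 ≤ᵐ[P] fun ω => (N ω : ℝ) - 1 := by
    filter_upwards [hN1] with ω hω
    simpa using hω
  have hzero := (integral_eq_zero_iff_of_nonneg_ae hnonneg
    (hNint.sub (integrable_const 1))).1 (by simp [integral_sub hNint (integrable_const 1), h])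
  filter_upwards [hzero] with ω hω
  exact_mod_cast sub_eq_zero.1 hω

end GeometricMoment

/-- **Inequality (69) of Appendix C.**  With `N ≥ 1` a.s. of finite mean `m = E[N]`,
`sup_{v ∈ [0,u]} v · E[(1 - v/u)^(N-1)] ≥ (u/m) (1 - 1/m)^(m-1)` (real exponent `m - 1`,
with the convention `0^0 = 1`). -/
theorem sup_v_mul_expectation_ge
    {Ω : Type*} [MeasurableSpace Ω] (P : Measure Ω) [IsProbabilityMeasure P]
    (u : ℝ) (hu : 0 < u)
    (N : Ω → ℕ) (hNmeas : Measurable N) (hN1 : ∀ᵐ ω ∂P, 1 ≤ N ω)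
    (hNint : Integrable (fun ω => (N ω : ℝ)) P)
    (m : ℝ) (hm : m = ∫ ω, (N ω : ℝ) ∂P) :
    sSup ((fun v : ℝ => v * ∫ ω, (1 - v / u) ^ (N ω - 1) ∂P) '' Set.Icc 0 u) ≥
      (u / m) * (1 - 1 / m) ^ (m - 1) := by
  have hm1 : 1 ≤ m := by
    have hmono := integral_mono_ae (integrable_const (1 : ℝ)) hNint
      (by filter_upwards [hN1] with ω hω; exact_mod_cast hω)
    simpa [hm] using hmono
  have hm0 : 0 < m := by linarith
  have hbdd : BddAbove ((fun v : ℝ => v * ∫ ω, (1 - v / u) ^ (N ω - 1) ∂P) '' Set.Icc 0 u) := by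
    refine ⟨u, ?_⟩
    rintro _ ⟨v, ⟨hv0, hvu⟩, rfl⟩
    have hq0 : 0 ≤ 1 - v / u := sub_nonneg.2 ((div_le_one hu).2 hvu)
    have hq1 : 1 - v / u ≤ 1 := sub_le_self _ (by positivity)
    exact (mul_le_of_le_one_right hv0 (integral_pow_natSub_one_le_one hNmeas hq0 hq1)).trans hvu
  refine le_csSup_of_le hbdd
    ⟨u / m, ⟨by positivity, div_le_self hu.le hm1⟩, rfl⟩ ?_
  have hquot : u / m / u = 1 / m := by field_simp
  simp only [hquot]
  refine mul_le_mul_of_nonneg_left ?_ (by positivity)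
  rcases hm1.eq_or_lt with h1 | h1
  · have hone := ae_eq_one_of_integral_eq_one hN1 hNint (hm.symm.trans h1.symm)
    have hpow : (fun ω => (1 - 1 / m) ^ (N ω - 1)) =ᵐ[P] fun _ => (1 : ℝ) := by
      filter_upwards [hone] with ω hω
      simp [hω]
    rw [integral_congr_ae hpow]
    simp [← h1]
  · have hq0 : 0 < 1 - 1 / m := sub_pos.2 ((div_lt_one hm0).2 h1)
    have hq1 : 1 - 1 / m ≤ 1 := sub_le_self _ (by positivity)
    have hjensen := rpow_integral_sub_one_le_integral_pow hNmeas hN1 hNint hq0 hq1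
    rwa [← hm] at hjensen
end

section
/- Let u > 0 and let q_1, q_2 be nonnegative reals with q_1 + q_2 = 1. Then sup_{v ∈ [0,u]} ( (1/2) q_1 v + q_2 · v · (1 − v/u) ) > (q_1 + 2 q_2) · u / 4 if and only if q_1 > 2/3. Moreover, if q_2 > 0 and q_1 ≤ 2 q_2 the supremum equals (q_1 + 2q_2)² u / (16 q_2), while if q_1 > 2 q_2 the supremum equals q_1 u / 2. -/
/-- When `a ≤ 2 * b`, the concave quadratic peaks at the interior vertex
`v = (a + 2 * b) * u / (4 * b)`. -/
lemma isGreatest_quadratic_of_le {u a b : ℝ} (hu : 0 < u) (ha : 0 ≤ a) (hb : 0 < b)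
    (hab : a ≤ 2 * b) :
    IsGreatest ((fun v : ℝ => (1 / 2) * a * v + b * v * (1 - v / u)) '' Set.Icc 0 u)
      ((a + 2 * b) ^ 2 * u / (16 * b)) := by
  constructor
  · refine ⟨(a + 2 * b) * u / (4 * b), ⟨by positivity, ?_⟩, ?_⟩
    · rw [div_le_iff₀ (by positivity)]
      nlinarith
    · field_simp
      ring
  · rintro _ ⟨v, -, rfl⟩
    have key : (a + 2 * b) ^ 2 * u / (16 * b) - ((1 / 2) * a * v + b * v * (1 - v / u))
        = ((a + 2 * b) * u - 4 * b * v) ^ 2 / (16 * b * u) := by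
      field_simp
      ring
    have : 0 ≤ ((a + 2 * b) * u - 4 * b * v) ^ 2 / (16 * b * u) := by positivity
    dsimp only
    linarith

/-- When `2 * b ≤ a`, the quadratic is increasing on `[0, u]` and peaks at `v = u`. -/
lemma isGreatest_quadratic_of_ge {u a b : ℝ} (hu : 0 < u) (hb : 0 ≤ b) (hab : 2 * b ≤ a) :
    IsGreatest ((fun v : ℝ => (1 / 2) * a * v + b * v * (1 - v / u)) '' Set.Icc 0 u)
      (a * u / 2) := by
  constructor
  · refine ⟨u, ⟨hu.le, le_rfl⟩, ?_⟩
    field_simp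
    ring
  · rintro _ ⟨v, ⟨-, hvu⟩, rfl⟩
    have key : a * u / 2 - ((1 / 2) * a * v + b * v * (1 - v / u))
        = (u - v) * ((a - 2 * b) / 2 + b * (u - v) / u) := by
      field_simp
      ring
    have huv : 0 ≤ u - v := sub_nonneg.2 hvu
    have hab' : 0 ≤ a - 2 * b := sub_nonneg.2 hab
    have : 0 ≤ (u - v) * ((a - 2 * b) / 2 + b * (u - v) / u) := by positivity
    dsimp only
    linarith

/-- **Example 1.**  With `n_max = 2`, `q₁ + q₂ = 1`, the robust-FH average sum multiplexing
gain `sup_{v ∈ [0,u]} ((1/2) q₁ v + q₂ v (1 - v/u))` exceeds the FD value `(q₁ + 2q₂)u/4`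
iff `q₁ > 2/3`; moreover the supremum equals `(q₁ + 2q₂)² u / (16 q₂)` when `q₂ > 0` and
`q₁ ≤ 2q₂`, and equals `q₁ u / 2` when `q₁ > 2q₂`. -/
theorem example1_eta1 (u q1 q2 : ℝ) (hu : 0 < u) (hq1 : 0 ≤ q1) (hq2 : 0 ≤ q2)
    (hsum : q1 + q2 = 1) :
    (sSup ((fun v : ℝ => (1 / 2) * q1 * v + q2 * v * (1 - v / u)) '' Set.Icc 0 u) >
        (q1 + 2 * q2) * u / 4 ↔ q1 > 2 / 3) ∧
    (0 < q2 → q1 ≤ 2 * q2 →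
      sSup ((fun v : ℝ => (1 / 2) * q1 * v + q2 * v * (1 - v / u)) '' Set.Icc 0 u)
        = (q1 + 2 * q2) ^ 2 * u / (16 * q2)) ∧
    (q1 > 2 * q2 →
      sSup ((fun v : ℝ => (1 / 2) * q1 * v + q2 * v * (1 - v / u)) '' Set.Icc 0 u)
        = q1 * u / 2) := by
  refine ⟨?_, fun hpos hle => (isGreatest_quadratic_of_le hu hq1 hpos hle).csSup_eq,
    fun hgt => (isGreatest_quadratic_of_ge hu hq2 hgt.le).csSup_eq⟩
  rcases le_or_gt q1 (2 * q2) with hle | hgt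
  · have hpos : 0 < q2 := by linarith
    rw [(isGreatest_quadratic_of_le hu hq1 hpos hle).csSup_eq]
    refine iff_of_false (not_lt.2 ?_) (by linarith)
    rw [div_le_div_iff₀ (by positivity) (by norm_num)]
    have : 0 ≤ (q1 + 2 * q2) * u * (2 * q2 - q1) :=
      mul_nonneg (by positivity) (sub_nonneg.2 hle)
    linarith
  · rw [(isGreatest_quadratic_of_ge hu hq2 hgt.le).csSup_eq]
    refine iff_of_true ?_ (by linarith)
    have : 0 < (q1 - 2 * q2) * u := mul_pos (sub_pos.2 hgt) hu
    linarith
end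

section
/- Let u > 0 and let q_1, q_2 be nonnegative reals with q_1 + q_2 = 1. Then sup_{v ∈ [0,u]} ( (1/2) ( q_1 v + q_2 · v · (1 − v/u) ) ) > u/4 if and only if q_1 > 1/2. Moreover, if 2 q_2 > 1 the supremum equals u/(8 q_2), while if 2 q_2 ≤ 1 the supremum equals q_1 u / 2. -/
/-- The hopping gain as a quadratic in the normalized bandwidth `v / u`. -/
theorem hoppingGain_eq {u q1 q2 v : ℝ} (hu : 0 < u) (hsum : q1 + q2 = 1) :
    (1 / 2) * (q1 * v + q2 * v * (1 - v / u)) = u / 2 * (v / u - q2 * (v / u) ^ 2) := by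
  obtain rfl : q1 = 1 - q2 := by linarith
  field_simp
  ring

/-- If `2 * q2 > 1`, the gain is maximal at the interior point `v = u / (2 * q2)`. -/
theorem isGreatest_hoppingGain_interior {u q1 q2 : ℝ} (hu : 0 < u) (hsum : q1 + q2 = 1)
    (hq : 2 * q2 > 1) :
    IsGreatest ((fun v : ℝ => (1 / 2) * (q1 * v + q2 * v * (1 - v / u))) '' Set.Icc 0 u)
      (u / (8 * q2)) := by
  have hq2 : 0 < q2 := by linarith
  refine ⟨⟨u / (2 * q2), ⟨by positivity, div_le_self hu.le hq.le⟩, ?_⟩, ?_⟩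
  · simp only [hoppingGain_eq hu hsum]
    field_simp
    ring
  · rintro _ ⟨v, -, rfl⟩
    simp only [hoppingGain_eq hu hsum]
    rw [le_div_iff₀ (by positivity)]
    nlinarith [mul_nonneg hu.le (sq_nonneg (2 * q2 * (v / u) - 1))]

/-- If `2 * q2 ≤ 1`, the gain is maximal at the endpoint `v = u`. -/
theorem isGreatest_hoppingGain_endpoint {u q1 q2 : ℝ} (hu : 0 < u) (hq2 : 0 ≤ q2)
    (hsum : q1 + q2 = 1) (hq : 2 * q2 ≤ 1) :
    IsGreatest ((fun v : ℝ => (1 / 2) * (q1 * v + q2 * v * (1 - v / u))) '' Set.Icc 0 u)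
      (q1 * u / 2) := by
  refine ⟨⟨u, ⟨hu.le, le_rfl⟩, ?_⟩, ?_⟩
  · simp only [div_self hu.ne']
    ring
  · rintro _ ⟨v, ⟨-, hv⟩, rfl⟩
    simp only [hoppingGain_eq hu hsum]
    have ht : v / u ≤ 1 := (div_le_one hu).2 hv
    have hfac : 0 ≤ 1 - q2 * (1 + v / u) := by nlinarith
    have hprod : 0 ≤ u * ((1 - v / u) * (1 - q2 * (1 + v / u))) :=
      mul_nonneg hu.le (mul_nonneg (by linarith) hfac)
    obtain rfl : q1 = 1 - q2 := by linarith
    linarith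

/-- **Example 2.**  With `n_max = 2`, `q₁ + q₂ = 1`, the robust-FH average minimum multiplexing
gain per user `sup_{v ∈ [0,u]} (1/2)(q₁ v + q₂ v (1 - v/u))` exceeds the FD value `u/4`
iff `q₁ > 1/2`; moreover the supremum equals `u/(8 q₂)` when `2 q₂ > 1`, and equals `q₁ u / 2`
when `2 q₂ ≤ 1`. -/
theorem example2_eta2 (u q1 q2 : ℝ) (hu : 0 < u) (hq1 : 0 ≤ q1) (hq2 : 0 ≤ q2)
    (hsum : q1 + q2 = 1) :
    (sSup ((fun v : ℝ => (1 / 2) * (q1 * v + q2 * v * (1 - v / u))) '' Set.Icc 0 u) >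
        u / 4 ↔ q1 > 1 / 2) ∧
    (2 * q2 > 1 →
      sSup ((fun v : ℝ => (1 / 2) * (q1 * v + q2 * v * (1 - v / u))) '' Set.Icc 0 u)
        = u / (8 * q2)) ∧
    (2 * q2 ≤ 1 →
      sSup ((fun v : ℝ => (1 / 2) * (q1 * v + q2 * v * (1 - v / u))) '' Set.Icc 0 u)
        = q1 * u / 2) := by
  refine ⟨?_, fun hq => (isGreatest_hoppingGain_interior hu hsum hq).csSup_eq,
    fun hq => (isGreatest_hoppingGain_endpoint hu hq2 hsum hq).csSup_eq⟩
  rcases lt_or_ge 1 (2 * q2) with hq | hq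
  · rw [(isGreatest_hoppingGain_interior hu hsum hq).csSup_eq]
    have hle : u / (8 * q2) ≤ u / 4 := div_le_div_of_nonneg_left hu.le (by norm_num) (by linarith)
    constructor <;> intro h <;> linarith
  · rw [(isGreatest_hoppingGain_endpoint hu hq2 hsum hq).csSup_eq]
    constructor <;> intro h <;> nlinarith
end
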